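/- arXiv:2503.08868 — 4 statements merged into one kernel-verified Lean document; each statement's English description precedes it below -/
import Mathlib

section
/- For all integers m, n ≥ 0 with p = m + n ≥ 1, the set B(m,n) is finite and has exactly 3^{p−1} elements. -/
open Function Set

/-- The monic centered cubic polynomial `F_{a,v}(z) = z³ − 3a²z + (2a³ + v)`. -/
noncomputable def Fav (a v : ℂ) : ℂ → ℂ := fun z => z ^ 3 - 3 * a ^ 2 * z + (2 * a ^ 3 + v)

/-- The set `B(m,n)` of maps with `F^{∘m}(a) = −a` and `F^{∘n}(−a) = a`. -/
noncomputable def Bset (m n : ℕ) : Set (ℂ × ℂ) :=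
  {w | (Fav w.1 w.2)^[m] w.1 = -w.1 ∧ (Fav w.1 w.2)^[n] (-w.1) = w.1}

/-!
In the equations `F^[m] a = -a` and `F^[n] (-a) = a`, with `m ≥ 1`, the leading monomials for the
degree-lexicographic order with `v > a` are powers of `v` and of `a`, namely `v ^ 3 ^ (m - 1)` and
`a ^ 3 ^ n` up to constants. Hence modulo the equations every polynomial is a combination of
`3 ^ (m + n - 1)` monomials, and there are at most that many solutions.

Conversely, in characteristic `3` we have `F (a + s) = s ^ 3 + v`, so the orbit of `a` is given by
the additive separable polynomials `w + w ^ 3 + ⋯ + w ^ 3 ^ (j - 1)` in `w = v - a`, and the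
solutions are parametrized by the `3 ^ (m + n - 1)` roots of one of them. The Jacobian of the
equations is invertible modulo `3`, so these solutions lift to the Witt vectors of an algebraic
closure of `ZMod 3`, a ring of characteristic zero. Solutions being algebraic over `ℚ`, their
number is the same over all algebraically closed fields of characteristic zero.
-/

open Finsupp (single)
open scoped MonomialOrder

section MonomialOrder

variable {σ R A : Type*} [CommRing R] [CommRing A] [Algebra R A]
  (o : MonomialOrder σ) {f : σ → MvPolynomial σ R} {d : σ → ℕ}

theorem aeval_mem_span_monomials [Fintype σ] (hf : ∀ i, IsUnit (o.leadingCoeff (f i)))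
    (hd : ∀ i, o.degree (f i) = single i (d i)) {x : σ → A}
    (hx : ∀ i, MvPolynomial.aeval x (f i) = 0) (p : MvPolynomial σ R) :
    MvPolynomial.aeval x p ∈
      Submodule.span R (range fun b : ∀ i, Fin (d i) => ∏ i, x i ^ (b i : ℕ)) := by
  obtain ⟨g, r, hp, -, hr⟩ := o.div hf p
  have hpr : MvPolynomial.aeval x p = MvPolynomial.aeval x r := by
    rw [hp, map_add, Finsupp.linearCombination_apply, map_finsuppSum]
    simp [hx]
  rw [hpr, MvPolynomial.aeval_eq_eval₂Hom, MvPolynomial.coe_eval₂Hom, MvPolynomial.eval₂_eq']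
  refine Submodule.sum_mem _ fun c hc => ?_
  rw [← Algebra.smul_def]
  have hlt (i : σ) : c i < d i := by
    simpa [hd, Finsupp.single_le_iff] using hr c hc i
  exact Submodule.smul_mem _ _ (Submodule.subset_span ⟨fun i => ⟨c i, hlt i⟩, rfl⟩)

theorem isIntegral_of_aeval_eq_zero [Finite σ] (hf : ∀ i, IsUnit (o.leadingCoeff (f i)))
    (hd : ∀ i, o.degree (f i) = single i (d i)) {x : σ → A}
    (hx : ∀ i, MvPolynomial.aeval x (f i) = 0) (i : σ) : IsIntegral R (x i) := by
  have := Fintype.ofFinite σ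
  have hspan : Subalgebra.toSubmodule (MvPolynomial.aeval (R := R) x).range =
      Submodule.span R (range fun b : ∀ i, Fin (d i) => ∏ i, x i ^ (b i : ℕ)) := by
    refine le_antisymm ?_ (Submodule.span_le.2 ?_)
    · rintro _ ⟨p, rfl⟩
      exact aeval_mem_span_monomials o hf hd hx p
    · rintro _ ⟨b, rfl⟩
      exact ⟨∏ i, MvPolynomial.X i ^ (b i : ℕ), by simp⟩
  refine IsIntegral.of_mem_of_fg (MvPolynomial.aeval (R := R) x).range ?_ _
    ⟨MvPolynomial.X i, MvPolynomial.aeval_X x i⟩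
  rw [hspan]
  exact Submodule.fg_span (finite_range _)

theorem linearIndependent_eval (σ R : Type*) [CommRing R] [IsDomain R] :
    LinearIndependent R fun (x : σ → R) (p : MvPolynomial σ R) => MvPolynomial.eval x p := by
  let ev (x : σ → R) : MvPolynomial σ R →* R := MvPolynomial.eval x
  have hev : Injective ev := fun x y hxy => funext fun i => by
    simpa [ev] using DFunLike.congr_fun hxy (MvPolynomial.X i)
  exact (linearIndependent_monoidHom (MvPolynomial σ R) R).comp ev hev

theorem linearIndepOn_monomials_zeros [Fintype σ] [IsDomain R]
    (hf : ∀ i, IsUnit (o.leadingCoeff (f i))) (hd : ∀ i, o.degree (f i) = single i (d i)) :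
    LinearIndepOn R (fun (x : σ → R) (b : ∀ i, Fin (d i)) => ∏ i, x i ^ (b i : ℕ))
      {x | ∀ i, MvPolynomial.eval x (f i) = 0} := by
  rw [linearIndepOn_iff']
  intro T c hT hc
  refine linearIndependent_iff'.1 (linearIndependent_eval σ R) T c (funext fun p => ?_)
  have aeval_apply (q : MvPolynomial σ R) (t : T) :
      MvPolynomial.aeval (fun i (s : T) => s.1 i) q t = MvPolynomial.eval t.1 q :=
    (MvPolynomial.comp_aeval_apply _ (Pi.evalAlgHom R (fun _ : T => R) t) q).trans
      (DFunLike.congr_fun (MvPolynomial.coe_aeval_eq_eval t.1) q)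
  -- Modulo the `f i` every polynomial is a combination of these monomials, so a functional on
  -- `T → R` that kills the monomials kills the values of all polynomials.
  let φ : (T → R) →ₗ[R] R := ∑ t : T, c t • LinearMap.proj t
  have hφ (y : T → R) : φ y = ∑ t : T, c t * y t := by simp [φ]
  have hker : MvPolynomial.aeval (fun i (t : T) => t.1 i) p ∈ LinearMap.ker φ := by
    refine Submodule.span_le.2 ?_ (aeval_mem_span_monomials o hf hd (fun i => ?_) p)
    · rintro _ ⟨b, rfl⟩
      simpa [hφ, Finset.sum_attach T fun t => c t * ∏ i, t i ^ (b i : ℕ)] using congrFun hc b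
    · ext t
      rw [aeval_apply, hT t.2 i, Pi.zero_apply]
  simpa [hφ, aeval_apply, Finset.sum_attach T fun t => c t * MvPolynomial.eval t p] using hker

theorem encard_zeros_le_prod [Fintype σ] [IsDomain R] (hf : ∀ i, IsUnit (o.leadingCoeff (f i)))
    (hd : ∀ i, o.degree (f i) = single i (d i)) :
    {x : σ → R | ∀ i, MvPolynomial.eval x (f i) = 0}.encard ≤ ∏ i, d i := by
  classical
  refine (linearIndepOn_monomials_zeros o hf hd).encard_le_toENat_rank.trans ?_
  simp

end MonomialOrder

section AdicContraction

variable {R M N : Type*} [CommRing R] [AddCommGroup M] [Module R M] [AddCommGroup N] [Module R N]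
  {I : Ideal R}

theorem ideal_smul_top_prod (I : Ideal R) :
    (I • ⊤ : Submodule R (M × N)) = (I • ⊤ : Submodule R M).prod (I • ⊤) := by
  rw [LinearMap.prod_eq_sup_map, Submodule.map_smul'', Submodule.map_smul'', ← Submodule.smul_sup,
    ← LinearMap.prod_eq_sup_map, Submodule.prod_top]

theorem smodEq_smul_top_prod_iff {x y : M × N} :
    x ≡ y [SMOD (I • ⊤ : Submodule R (M × N))] ↔
      x.1 ≡ y.1 [SMOD (I • ⊤ : Submodule R M)] ∧ x.2 ≡ y.2 [SMOD (I • ⊤ : Submodule R N)] := by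
  simp only [SModEq.sub_mem, ideal_smul_top_prod, Submodule.mem_prod, Prod.fst_sub, Prod.snd_sub]

theorem isAdicComplete_prod [IsAdicComplete I M] [IsAdicComplete I N] :
    IsAdicComplete I (M × N) where
  haus' x hx := Prod.ext
    (IsHausdorff.haus inferInstance x.1 fun n => (smodEq_smul_top_prod_iff.1 (hx n)).1)
    (IsHausdorff.haus inferInstance x.2 fun n => (smodEq_smul_top_prod_iff.1 (hx n)).2)
  prec' f hf := by
    obtain ⟨L, hL⟩ := IsPrecomplete.prec (I := I) inferInstance fun {m n} (hmn : m ≤ n) =>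
      (smodEq_smul_top_prod_iff.1 (hf hmn)).1
    obtain ⟨L', hL'⟩ := IsPrecomplete.prec (I := I) inferInstance fun {m n} (hmn : m ≤ n) =>
      (smodEq_smul_top_prod_iff.1 (hf hmn)).2
    exact ⟨(L, L'), fun n => smodEq_smul_top_prod_iff.2 ⟨hL n, hL' n⟩⟩

theorem exists_isFixedPt_of_adic_contraction [IsAdicComplete I M] {g : M → M}
    (hg : ∀ k ≠ 0, ∀ x y, x ≡ y [SMOD (I ^ k • ⊤ : Submodule R M)] →
      g x ≡ g y [SMOD (I ^ (k + 1) • ⊤ : Submodule R M)])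
    {x₀ : M} (hx₀ : g x₀ ≡ x₀ [SMOD (I • ⊤ : Submodule R M)]) :
    ∃ x, IsFixedPt g x ∧ x ≡ x₀ [SMOD (I • ⊤ : Submodule R M)] := by
  have hstep (n : ℕ) : g^[n + 1] x₀ ≡ g^[n] x₀ [SMOD (I ^ (n + 1) • ⊤ : Submodule R M)] := by
    induction n with
    | zero => simpa using hx₀
    | succ n ih =>
      simpa only [iterate_succ_apply'] using hg (n + 1) n.succ_ne_zero _ _ ih
  have hcauchy : AdicCompletion.IsAdicCauchy I M fun n => g^[n] x₀ :=
    (AdicCompletion.isAdicCauchy_iff I M _).2 fun n =>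
      ((hstep n).mono (Submodule.pow_smul_top_le I M n.le_succ)).symm
  obtain ⟨x, hx⟩ := IsPrecomplete.prec (I := I) inferInstance hcauchy
  refine ⟨x, (IsHausdorff.eq_iff_smodEq (I := I)).2 fun n => ?_, ?_⟩
  · have hgx : g^[n + 2] x₀ ≡ g x [SMOD (I ^ (n + 2) • ⊤ : Submodule R M)] := by
      simpa only [iterate_succ_apply'] using hg (n + 1) n.succ_ne_zero _ _ (hx (n + 1))
    exact (hgx.symm.trans (hx (n + 2))).mono (Submodule.pow_smul_top_le I M (n.le_add_right 2))
  · simpa using (hx 1).symm.trans (by simpa using hx₀)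

end AdicContraction

section Cubic

variable {R S : Type*} [CommRing R] [CommRing S]

/-- The monic centered cubic polynomial with critical points `±a` and `v` the value at `a`. -/
def cubic (a v z : R) : R := z ^ 3 - 3 * a ^ 2 * z + (2 * a ^ 3 + v)

theorem cubic_eq_sq_mul_add (a v z : R) : cubic a v z = (z - a) ^ 2 * (z + 2 * a) + v := by
  rw [cubic]
  ring

theorem cubic_self (a v : R) : cubic a v a = v := by
  simp [cubic_eq_sq_mul_add]

theorem map_iterate_cubic (φ : R →+* S) (a v z : R) (j : ℕ) :
    φ ((cubic a v)^[j] z) = (cubic (φ a) (φ v))^[j] (φ z) :=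
  Semiconj.iterate_right (fun z => by simp [cubic, map_ofNat]) j z

variable (R) in
/-- The set of `(a, v)` for which the two critical points `a` and `-a` of `cubic a v` are
exchanged by its `m`-th and `n`-th iterates: centers of bitransitive hyperbolic components in
Milnor's terminology. -/
def bitransitiveCenters (m n : ℕ) : Set (R × R) :=
  {w | (cubic w.1 w.2)^[m] w.1 = -w.1 ∧ (cubic w.1 w.2)^[n] (-w.1) = w.1}

theorem map_mem_bitransitiveCenters_iff {φ : R →+* S} (hφ : Injective φ) {m n : ℕ} {w : R × R} :
    Prod.map φ φ w ∈ bitransitiveCenters S m n ↔ w ∈ bitransitiveCenters R m n := by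
  simp only [bitransitiveCenters, mem_ofPred_eq, Prod.map_fst, Prod.map_snd, ← map_neg,
    ← map_iterate_cubic, hφ.eq_iff]

theorem mem_bitransitiveCenters_succ_iff {m n : ℕ} {a v : R} :
    (a, v) ∈ bitransitiveCenters R (m + 1) n ↔
      (cubic a v)^[m + 1] a = -a ∧ (cubic a v)^[m + n + 1] a = a := by
  refine and_congr_right fun h => ?_
  rw [add_right_comm, add_comm, iterate_add_apply, h]

theorem bitransitiveCenters_zero_left (n : ℕ) :
    bitransitiveCenters R 0 n = bitransitiveCenters R n 0 := by
  ext ⟨a, v⟩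
  have hswap : a = -a ∧ (cubic a v)^[n] (-a) = a ↔ (cubic a v)^[n] a = -a ∧ -a = a := by
    grind
  exact hswap

end Cubic

section Degree

variable {σ R : Type*} [CommRing R] [IsDomain R] (o : MonomialOrder σ) {a v z : MvPolynomial σ R}

theorem degree_cubic (ha : o.degree a ≺[o] o.degree z) (hv : o.degree v ≼[o] o.degree z) :
    o.degree (cubic a v z) = 3 • o.degree z := by
  have hz : o.degree z ≠ 0 := fun h => (o.zero_le _).not_gt (by simpa [h] using ha)
  have hsub : o.degree (z - a) = o.degree z := o.degree_sub_of_lt ha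
  have hadd : o.degree (z + 2 * a) = o.degree z := by
    refine o.degree_add_of_lt ((le_of_eq ?_).trans_lt ((o.degree_smul_le (r := 2)).trans_lt ha))
    rw [MvPolynomial.smul_eq_C_mul, map_ofNat]
  have hmul : o.degree ((z - a) ^ 2 * (z + 2 * a)) = 3 • o.degree z := by
    rw [o.degree_mul (pow_ne_zero 2 <| o.ne_zero_of_degree_ne_zero (hsub ▸ hz))
      (o.ne_zero_of_degree_ne_zero (hadd ▸ hz)), o.degree_pow, hsub, hadd, ← succ_nsmul]
  have hlt : o.degree z ≺[o] 3 • o.degree z := by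
    rw [map_nsmul]
    simpa using nsmul_lt_nsmul_left (o.toSyn_lt_iff_ne_zero.2 ((o.toSyn_eq_zero_iff _).not.2 hz))
      (show 1 < 3 by norm_num)
  rw [cubic_eq_sq_mul_add, o.degree_add_of_lt (hmul ▸ hv.trans_lt hlt), hmul]

theorem degree_iterate_cubic (ha : o.degree a ≺[o] o.degree z) (hv : o.degree v ≼[o] o.degree z)
    (j : ℕ) : o.degree ((cubic a v)^[j] z) = 3 ^ j • o.degree z := by
  induction j with
  | zero => simp
  | succ j ih =>
    have hle : o.degree z ≼[o] 3 ^ j • o.degree z :=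
      o.toSyn_monotone (le_self_nsmul _root_.zero_le (by positivity))
    rw [iterate_succ_apply', degree_cubic o (ih ▸ ha.trans_le hle) (ih ▸ hv.trans hle), ih,
      smul_smul, pow_succ']

end Degree

section Equations

open MonomialOrder (degLex)
open MvPolynomial (X)

variable {A : Type*} [CommRing A]

/-- The two equations defining `bitransitiveCenters`, as polynomials in `X 0 = v` and `X 1 = a`:
the degree-lexicographic order puts `X 0` above `X 1`, and `v` has to dominate `a`. -/
noncomputable def bitransitivePoly (R : Type*) [CommRing R] (m n : ℕ) :
    Fin 2 → MvPolynomial (Fin 2) R :=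
  ![(cubic (X 1) (X 0))^[m] (X 1) + X 1, (cubic (X 1) (X 0))^[n] (-X 1) - X 1]

theorem aeval_bitransitivePoly_eq_zero_iff {R : Type*} [CommRing R] [Algebra R A] {m n : ℕ}
    {a v : A} :
    (∀ i, MvPolynomial.aeval ![v, a] (bitransitivePoly R m n i) = 0) ↔
      (a, v) ∈ bitransitiveCenters A m n := by
  have hiter (z : MvPolynomial (Fin 2) R) (j : ℕ) :
      MvPolynomial.aeval ![v, a] ((cubic (X 1) (X 0))^[j] z) =
        (cubic a v)^[j] (MvPolynomial.aeval ![v, a] z) := by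
    simpa using map_iterate_cubic (MvPolynomial.aeval (R := R) ![v, a]).toRingHom (X 1) (X 0) z j
  simp [bitransitivePoly, bitransitiveCenters, Fin.forall_fin_two, hiter, sub_eq_zero,
    add_eq_zero_iff_eq_neg]

variable {R : Type*} [CommRing R] [IsDomain R]

theorem degLex_single_lt_single_of_lt {σ : Type*} [LinearOrder σ] [WellFoundedGT σ] (i j : σ)
    {k l : ℕ} (h : k < l) : single i k ≺[degLex] single j l := by
  simp [MonomialOrder.degLex_lt_iff, Finsupp.DegLex.lt_iff, h]

theorem degree_bitransitivePoly_zero (m n : ℕ) :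
    degLex.degree (bitransitivePoly R (m + 1) n 0) = single 0 (3 ^ m) := by
  have hav : degLex.degree (X 1 : MvPolynomial (Fin 2) R) ≺[degLex]
      degLex.degree (X 0 : MvPolynomial (Fin 2) R) := by
    simpa only [degLex.degree_X] using MonomialOrder.degLex_single_lt_iff.2 (by decide)
  have hiter : degLex.degree ((cubic (X 1) (X 0))^[m] (X 0) : MvPolynomial (Fin 2) R) =
      3 ^ m • degLex.degree (X 0 : MvPolynomial (Fin 2) R) :=
    degree_iterate_cubic degLex hav le_rfl m
  have hle : degLex.degree (X 0 : MvPolynomial (Fin 2) R) ≼[degLex]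
      3 ^ m • degLex.degree (X 0 : MvPolynomial (Fin 2) R) :=
    degLex.toSyn_monotone (le_self_nsmul _root_.zero_le (by positivity))
  rw [bitransitivePoly, Matrix.cons_val_zero, iterate_succ_apply, cubic_self,
    degLex.degree_add_of_lt (hiter ▸ hav.trans_le hle), hiter, degLex.degree_X]
  simp

theorem degree_smul_X_pow {σ : Type*} (o : MonomialOrder σ) {c : R} (hc : c ≠ 0) (i : σ) (j : ℕ) :
    o.degree (c • X i ^ j : MvPolynomial σ R) = single i j := by
  rw [o.degree_smul_of_mem_nonZeroDivisors (mem_nonZeroDivisors_of_ne_zero hc),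
    o.degree_pow, o.degree_X, Finsupp.smul_single, smul_eq_mul, mul_one]

theorem degree_cubic_neg_self [CharZero R] :
    degLex.degree (cubic (X 1) (X 0) (-X 1) : MvPolynomial (Fin 2) R) = single 1 3 := by
  have h : (cubic (X 1) (X 0) (-X 1) : MvPolynomial (Fin 2) R) = (4 : R) • X 1 ^ 3 + X 0 := by
    rw [cubic, MvPolynomial.smul_eq_C_mul, map_ofNat]
    ring
  have h4 : degLex.degree ((4 : R) • X 1 ^ 3 : MvPolynomial (Fin 2) R) = single 1 3 :=
    degree_smul_X_pow degLex (by simp) 1 3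
  rw [h, degLex.degree_add_of_lt, h4]
  rw [h4, degLex.degree_X]
  exact degLex_single_lt_single_of_lt 0 1 (by norm_num)

theorem degree_bitransitivePoly_one [CharZero R] (m n : ℕ) :
    degLex.degree (bitransitivePoly R m n 1) = single 1 (3 ^ n) := by
  rw [bitransitivePoly, Matrix.cons_val_one, Matrix.cons_val_zero]
  rcases n with - | n
  · have h : (-X 1 - X 1 : MvPolynomial (Fin 2) R) = (-2 : R) • X 1 ^ 1 := by
      rw [MvPolynomial.smul_eq_C_mul, map_neg, map_ofNat]
      ring
    rw [iterate_zero_apply, h, degree_smul_X_pow degLex (by simp), pow_zero]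
  · have hX (i : Fin 2) {k : ℕ} (hk : 1 < k) :
        degLex.degree (X i : MvPolynomial (Fin 2) R) ≺[degLex] single 1 k := by
      rw [degLex.degree_X]
      exact degLex_single_lt_single_of_lt i 1 hk
    have hiter : degLex.degree ((cubic (X 1) (X 0))^[n + 1] (-X 1) : MvPolynomial (Fin 2) R) =
        single 1 (3 ^ (n + 1)) := by
      rw [iterate_succ_apply, degree_iterate_cubic, degree_cubic_neg_self, Finsupp.smul_single,
        smul_eq_mul, pow_succ]
      all_goals rw [degree_cubic_neg_self]
      exacts [hX 1 (by norm_num), (hX 0 (by norm_num)).le]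
    rw [degLex.degree_sub_of_lt, hiter]
    rw [hiter]
    exact hX 1 (one_lt_pow₀ (by norm_num) n.succ_ne_zero)

theorem degree_bitransitivePoly [CharZero R] (m n : ℕ) (i : Fin 2) :
    degLex.degree (bitransitivePoly R (m + 1) n i) = single i (![3 ^ m, 3 ^ n] i) := by
  fin_cases i
  exacts [degree_bitransitivePoly_zero m n, degree_bitransitivePoly_one (m + 1) n]

theorem isUnit_leadingCoeff_bitransitivePoly {K : Type*} [Field K] [CharZero K] (m n : ℕ)
    (i : Fin 2) : IsUnit (degLex.leadingCoeff (bitransitivePoly K (m + 1) n i)) := by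
  refine isUnit_iff_ne_zero.2 (degLex.leadingCoeff_ne_zero_iff.2
    (degLex.ne_zero_of_degree_ne_zero ?_))
  rw [degree_bitransitivePoly]
  fin_cases i <;> simp

theorem isAlgebraic_of_mem_bitransitiveCenters (K : Type*) [Field K] [CharZero K]
    [Algebra K A] {m n : ℕ} {w : A × A} (hw : w ∈ bitransitiveCenters A (m + 1) n) :
    IsAlgebraic K w.1 ∧ IsAlgebraic K w.2 := by
  have hint := isIntegral_of_aeval_eq_zero degLex (isUnit_leadingCoeff_bitransitivePoly m n)
    (degree_bitransitivePoly (R := K) m n) (aeval_bitransitivePoly_eq_zero_iff.2 hw)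
  exact ⟨(hint 1).isAlgebraic, (hint 0).isAlgebraic⟩

theorem encard_bitransitiveCenters_le_pow (K : Type*) [Field K] [CharZero K] (m n : ℕ) :
    (bitransitiveCenters K (m + 1) n).encard ≤ 3 ^ (m + n) := by
  have hinj : Injective fun w : K × K => ![w.2, w.1] := fun w w' h =>
    Prod.ext (congrFun h 1) (congrFun h 0)
  rw [← hinj.encard_image]
  refine (encard_le_encard ?_).trans ((encard_zeros_le_prod degLex
    (isUnit_leadingCoeff_bitransitivePoly m n) (degree_bitransitivePoly (R := K) m n)).trans ?_)
  · rintro _ ⟨w, hw, rfl⟩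
    exact aeval_bitransitivePoly_eq_zero_iff.2 hw
  · simp [pow_add]

end Equations

section Newton

variable {R k : Type*} [CommRing R] [CommRing k] {I : Ideal R} {a a' v v' z z' : R} {e : ℕ}

theorem mul_smodEq_mul_pow_succ {c x y : R} (hc : c ∈ I) (h : x ≡ y [SMOD I ^ e]) :
    c * x ≡ c * y [SMOD I ^ (e + 1)] := by
  rw [SModEq.sub_mem] at h ⊢
  rw [← mul_sub, pow_succ']
  exact Ideal.mul_mem_mul hc h

theorem cubic_sub_smodEq (hI : (3 : R) ∈ I) (he : e ≠ 0) (ha : a' ≡ a [SMOD I ^ e])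
    (hz : z' ≡ z [SMOD I ^ e]) : cubic a' v' z' - v' ≡ cubic a v z - v [SMOD I ^ (e + 1)] := by
  have hcube {x y : R} (h : x ≡ y [SMOD I ^ e]) : x ^ 3 ≡ y ^ 3 [SMOD I ^ (e + 1)] :=
    h.pow_add_one (by exact_mod_cast hI) he
  have hcubic (a v z : R) : cubic a v z - v = z ^ 3 - 3 * (a ^ 2 * z) + 2 * a ^ 3 := by
    rw [cubic]
    ring
  rw [hcubic, hcubic]
  exact ((hcube hz).sub (mul_smodEq_mul_pow_succ hI ((ha.pow 2).mul hz))).add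
    (SModEq.rfl.mul (hcube ha))

theorem iterate_cubic_sub_smodEq (hI : (3 : R) ∈ I) (he : e ≠ 0) (ha : a' ≡ a [SMOD I ^ e])
    (hv : v' ≡ v [SMOD I ^ e]) (hz : z' ≡ z [SMOD I ^ e]) (j : ℕ) :
    (cubic a' v')^[j + 1] z' - v' ≡ (cubic a v)^[j + 1] z - v [SMOD I ^ (e + 1)] := by
  induction j generalizing z z' with
  | zero => exact cubic_sub_smodEq hI he ha hz
  | succ j ih =>
    have h := ((cubic_sub_smodEq (v' := v') (v := v) hI he ha hz).mono
      (Ideal.pow_le_pow_right e.le_succ)).add hv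
    rw [sub_add_cancel, sub_add_cancel] at h
    simpa only [iterate_succ_apply] using ih h

/-- Newton's iteration for the equations `P = F^[m + 1] a + a = 0` and `Q = F^[m + n + 1] a - a = 0`
in `(a, v)`. Modulo `3` their Jacobian is the constant matrix `!![1, 1; -1, 1]`, so its inverse can
be replaced by `!![-1, 1; 2, -1]`, which is invertible over `ℤ`. -/
def newtonStep (m n : ℕ) (w : R × R) : R × R :=
  let P := (cubic w.1 w.2)^[m + 1] w.1 + w.1
  let Q := (cubic w.1 w.2)^[m + n + 1] w.1 - w.1
  (w.1 + P - Q, w.2 - 2 * P + Q)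

theorem isFixedPt_newtonStep_iff {m n : ℕ} {w : R × R} :
    IsFixedPt (newtonStep m n) w ↔ w ∈ bitransitiveCenters R (m + 1) n := by
  rw [mem_bitransitiveCenters_succ_iff, IsFixedPt, newtonStep, Prod.ext_iff]
  constructor
  · rintro ⟨ha, hv⟩
    exact ⟨by linear_combination -ha - hv, by linear_combination -2 * ha - hv⟩
  · rintro ⟨hP, hQ⟩
    exact ⟨by linear_combination hP - hQ, by linear_combination -2 * hP + hQ⟩

theorem map_newtonStep (φ : R →+* k) (m n : ℕ) (w : R × R) :
    Prod.map φ φ (newtonStep m n w) = newtonStep m n (Prod.map φ φ w) := by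
  simp only [newtonStep, Prod.map_apply, map_add, map_sub, map_mul, map_ofNat, map_iterate_cubic,
    Prod.map_fst, Prod.map_snd]

theorem newtonStep_smodEq (hI : (3 : R) ∈ I) (he : e ≠ 0) (m n : ℕ) {w w' : R × R}
    (h : w' ≡ w [SMOD (I ^ e • ⊤ : Submodule R (R × R))]) :
    newtonStep m n w' ≡ newtonStep m n w [SMOD (I ^ (e + 1) • ⊤ : Submodule R (R × R))] := by
  simp only [smodEq_smul_top_prod_iff, smul_eq_mul, Ideal.mul_top] at h ⊢
  obtain ⟨ha, hv⟩ := h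
  have h3 : 3 * w'.1 ≡ 3 * w.1 [SMOD I ^ (e + 1)] := mul_smodEq_mul_pow_succ hI ha
  have hP := iterate_cubic_sub_smodEq hI he ha hv ha m
  have hQ := iterate_cubic_sub_smodEq hI he ha hv ha (m + n)
  constructor
  · convert (h3.add hP).sub hQ using 1 <;> (simp only [newtonStep]; ring)
  · convert (hQ.sub (hP.add hP)).sub h3 using 1 <;> (simp only [newtonStep]; ring)

theorem surjOn_bitransitiveCenters [CharP k 3] {π : R →+* k} (hπ : Surjective π)
    [IsAdicComplete (RingHom.ker π) R] (m n : ℕ) :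
    SurjOn (Prod.map π π) (bitransitiveCenters R (m + 1) n) (bitransitiveCenters k (m + 1) n) := by
  have hsmod (x y : R × R) :
      x ≡ y [SMOD (RingHom.ker π • ⊤ : Submodule R (R × R))] ↔ Prod.map π π x = Prod.map π π y := by
    rw [smodEq_smul_top_prod_iff]
    simp only [smul_eq_mul, Ideal.mul_top, SModEq.sub_mem, RingHom.sub_mem_ker_iff, Prod.ext_iff,
      Prod.map_fst, Prod.map_snd]
  have h3 : (3 : R) ∈ RingHom.ker π := by
    rw [RingHom.mem_ker, map_ofNat]
    exact CharP.cast_eq_zero k 3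
  intro w hw
  obtain ⟨w₀, rfl⟩ := hπ.prodMap hπ w
  have hw₀ : newtonStep m n w₀ ≡ w₀ [SMOD (RingHom.ker π • ⊤ : Submodule R (R × R))] := by
    rw [hsmod, map_newtonStep]
    exact isFixedPt_newtonStep_iff.2 hw
  have := isAdicComplete_prod (M := R) (N := R) (I := RingHom.ker π)
  obtain ⟨x, hx, hxw₀⟩ := exists_isFixedPt_of_adic_contraction
    (fun e he x y => newtonStep_smodEq h3 he m n) hw₀
  exact ⟨x, isFixedPt_newtonStep_iff.1 hx, (hsmod _ _).1 hxw₀⟩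

end Newton

section CharThree

open Polynomial

/-- The polynomial `X + X ^ p + ⋯ + X ^ (p ^ (j - 1))`, which in characteristic `p` is the additive
polynomial `1 + φ + ⋯ + φ ^ (j - 1)` of the Frobenius `φ`. -/
noncomputable def frobeniusSum (k : Type*) [Semiring k] (p j : ℕ) : k[X] :=
  ∑ i ∈ Finset.range j, X ^ p ^ i

theorem eval_frobeniusSum_succ {k : Type*} [CommRing k] (p : ℕ) [Fact p.Prime] [CharP k p] (j : ℕ)
    (w : k) : (frobeniusSum k p (j + 1)).eval w = (frobeniusSum k p j).eval w ^ p + w := by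
  simp only [frobeniusSum, eval_finsetSum, eval_add, eval_pow, eval_X, sum_pow_char p,
    Finset.sum_range_succ', ← pow_mul, ← pow_succ, pow_zero, pow_one]

theorem iterate_cubic_self_of_charThree {k : Type*} [CommRing k] [CharP k 3] (a v : k) (j : ℕ) :
    (cubic a v)^[j] a = a + (frobeniusSum k 3 j).eval (v - a) := by
  have h3 : (3 : k) = 0 := CharP.cast_eq_zero k 3
  induction j with
  | zero => simp [frobeniusSum]
  | succ j ih =>
    rw [iterate_succ_apply', ih, eval_frobeniusSum_succ, cubic_eq_sq_mul_add]
    linear_combination a * (frobeniusSum k 3 j).eval (v - a) ^ 2 * h3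

theorem natDegree_frobeniusSum_succ (k : Type*) [Semiring k] [Nontrivial k] {p : ℕ} (hp : 1 < p)
    (j : ℕ) : (frobeniusSum k p (j + 1)).natDegree = p ^ j := by
  induction j with
  | zero => simp [frobeniusSum]
  | succ j ih =>
    rw [frobeniusSum, Finset.sum_range_succ, ← frobeniusSum,
      natDegree_add_eq_right_of_natDegree_lt, natDegree_X_pow]
    rw [ih, natDegree_X_pow]
    exact Nat.pow_lt_pow_right hp j.lt_succ_self

theorem separable_frobeniusSum_succ (k : Type*) [CommRing k] (p : ℕ) [CharP k p] (j : ℕ) :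
    (frobeniusSum k p (j + 1)).Separable := by
  have hderiv : derivative (frobeniusSum k p (j + 1)) = 1 := by
    simp [frobeniusSum, Finset.sum_range_succ', derivative_X_pow, pow_succ]
  rw [Separable, hderiv]
  exact isCoprime_one_right

theorem encard_rootSet_frobeniusSum_succ (k : Type*) [Field k] [IsAlgClosed k] (p : ℕ)
    [Fact p.Prime] [CharP k p] (j : ℕ) :
    ((frobeniusSum k p (j + 1)).rootSet k).encard = p ^ j := by
  rw [encard_eq_coe_toFinset_card, toFinset_card, card_rootSet_eq_natDegree
    (separable_frobeniusSum_succ k p j) (IsAlgClosed.splits_domain _),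
    natDegree_frobeniusSum_succ k (Fact.out : p.Prime).one_lt, Nat.cast_pow]

theorem pow_le_encard_bitransitiveCenters_of_charThree (k : Type*) [Field k] [IsAlgClosed k]
    [CharP k 3] (m n : ℕ) : 3 ^ (m + n) ≤ (bitransitiveCenters k (m + 1) n).encard := by
  have h3 : (3 : k) = 0 := CharP.cast_eq_zero k 3
  let S := (frobeniusSum k 3 (m + 1)).eval
  have hmaps : MapsTo (fun w => (S w, S w + w)) ((frobeniusSum k 3 (m + n + 1)).rootSet k)
      (bitransitiveCenters k (m + 1) n) := fun w hw => by
    have hroot : (frobeniusSum k 3 (m + n + 1)).eval w = 0 := by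
      simpa using (mem_rootSet.1 hw).2
    rw [mem_bitransitiveCenters_succ_iff, iterate_cubic_self_of_charThree,
      iterate_cubic_self_of_charThree, add_sub_cancel_left, hroot, add_zero]
    exact ⟨by linear_combination S w * h3, rfl⟩
  have hinj : Injective fun w => (S w, S w + w) := fun w w' h => by
    simp only [Prod.mk.injEq] at h
    linear_combination h.2 - h.1
  have hroots := encard_rootSet_frobeniusSum_succ k 3 (m + n)
  rw [Nat.cast_ofNat] at hroots
  exact hroots ▸ encard_le_encard_of_injOn hmaps hinj.injOn

end CharThree

section Count

theorem encard_bitransitiveCenters_le_of_injective {R S : Type*} [CommRing R] [CommRing S]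
    {φ : R →+* S} (hφ : Injective φ) (m n : ℕ) :
    (bitransitiveCenters R m n).encard ≤ (bitransitiveCenters S m n).encard :=
  encard_le_encard_of_injOn (fun _ hw => (map_mem_bitransitiveCenters_iff hφ).2 hw)
    (hφ.prodMap hφ).injOn

theorem encard_bitransitiveCenters_le_of_isAlgClosed (F K L : Type*) [Field F] [CharZero F]
    [Field K] [Algebra F K] [IsAlgClosed K] [Field L] [Algebra F L] (m n : ℕ) :
    (bitransitiveCenters L (m + 1) n).encard ≤ (bitransitiveCenters K (m + 1) n).encard := by
  let E := algebraicClosure F L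
  let ψ : E →ₐ[F] K := IsAlgClosed.lift
  have himage : bitransitiveCenters L (m + 1) n ⊆
      Prod.map E.val E.val '' bitransitiveCenters E (m + 1) n := fun w hw => by
    obtain ⟨ha, hv⟩ := isAlgebraic_of_mem_bitransitiveCenters F hw
    refine ⟨(⟨w.1, mem_algebraicClosure_iff.2 ha⟩, ⟨w.2, mem_algebraicClosure_iff.2 hv⟩), ?_, rfl⟩
    exact (map_mem_bitransitiveCenters_iff (φ := E.val.toRingHom) E.val.injective).1 hw
  exact (encard_le_encard himage).trans ((encard_image_le _ _).trans
    (encard_bitransitiveCenters_le_of_injective ψ.toRingHom.injective m.succ n))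

theorem charZero_wittVector (p : ℕ) [Fact p.Prime] (k : Type*) [Field k] [CharP k p] :
    CharZero (WittVector p k) := by
  let φ : ℤ_[p] →+* WittVector p k :=
    (WittVector.map (ZMod.castHom dvd_rfl k)).comp (WittVector.equiv p).symm.toRingHom
  exact charZero_of_injective_ringHom (f := φ)
    ((WittVector.map_injective _ (RingHom.injective _)).comp (WittVector.equiv p).symm.injective)

theorem pow_le_encard_bitransitiveCenters (K : Type*) [Field K] [CharZero K] [IsAlgClosed K]
    (m n : ℕ) : 3 ^ (m + n) ≤ (bitransitiveCenters K (m + 1) n).encard := by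
  let k := AlgebraicClosure (ZMod 3)
  let W := WittVector 3 k
  have : CharZero W := charZero_wittVector 3 k
  have : CharZero (FractionRing W) := IsFractionRing.charZero (R := W)
  have : IsAdicComplete (RingHom.ker (WittVector.constantCoeff : W →+* k)) W := by
    rw [WittVector.ker_constantCoeff]
    infer_instance
  calc (3 : ℕ∞) ^ (m + n)
      ≤ (bitransitiveCenters k (m + 1) n).encard :=
        pow_le_encard_bitransitiveCenters_of_charThree k m n
    _ ≤ (bitransitiveCenters W (m + 1) n).encard :=
        (encard_le_encard (surjOn_bitransitiveCenters
          (WittVector.constantCoeff_surjective 3) m n)).trans (encard_image_le _ _)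
    _ ≤ (bitransitiveCenters (FractionRing W) (m + 1) n).encard :=
        encard_bitransitiveCenters_le_of_injective (IsFractionRing.injective W _) (m + 1) n
    _ ≤ (bitransitiveCenters K (m + 1) n).encard :=
        encard_bitransitiveCenters_le_of_isAlgClosed ℚ K _ m n

theorem encard_bitransitiveCenters_succ (K : Type*) [Field K] [CharZero K] [IsAlgClosed K]
    (m n : ℕ) : (bitransitiveCenters K (m + 1) n).encard = 3 ^ (m + n) :=
  (encard_bitransitiveCenters_le_pow K m n).antisymm (pow_le_encard_bitransitiveCenters K m n)

theorem stmt2_general (K : Type*) [Field K] [CharZero K] [IsAlgClosed K] (m n : ℕ)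
    (hmn : 1 ≤ m + n) :
    (bitransitiveCenters K m n).Finite ∧ (bitransitiveCenters K m n).ncard = 3 ^ (m + n - 1) := by
  have hencard : (bitransitiveCenters K m n).encard = (3 ^ (m + n - 1) : ℕ) := by
    rcases m with - | m
    · obtain ⟨n, rfl⟩ := Nat.exists_eq_add_one.2 (show 0 < n by omega)
      simp [bitransitiveCenters_zero_left, encard_bitransitiveCenters_succ]
    · simp [encard_bitransitiveCenters_succ, add_right_comm]
  exact ⟨finite_of_encard_eq_coe hencard, by rw [ncard, hencard, ENat.toNat_natCast]⟩

end Count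

theorem stmt2 (m n : ℕ) (hmn : 1 ≤ m + n) :
    (Bset m n).Finite ∧ (Bset m n).ncard = 3 ^ (m + n - 1) :=
  stmt2_general ℂ m n hmn
end

section
/- Let m, n ≥ 0 be integers with p = m + n ≥ 1, and let p′ be a positive divisor of p. Let m′ be the unique integer with 1 ≤ m′ ≤ p′ and m′ ≡ m (mod p′), and set n′ = p′ − m′. Then B(m,n) ∩ S_{p′} = B(m′,n′) ∩ S_{p′}. -/
open Function Set

/-- `z` has exact period `p ≥ 1` under `F`. -/
def HasExactPeriod (F : ℂ → ℂ) (z : ℂ) (p : ℕ) : Prop :=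
  F^[p] z = z ∧ ∀ j, 0 < j → j < p → F^[j] z ≠ z

/-- The parameter curve `S_p`: the set of `(a,v)` such that `a` has exact period `p`
under `F_{a,v}`. -/
noncomputable def Sper (p : ℕ) : Set (ℂ × ℂ) :=
  {w | HasExactPeriod (Fav w.1 w.2) w.1 p}

/-!
Once `a` is periodic of period `p'` and `p' ∣ m + n`, the equation `F^[m] a = -a` already forces
`F^[n] (-a) = F^[m + n] a = a`, and it depends on `m` only modulo `p'`.
-/

section Iterate

variable {α : Type*} {f : α → α} {x : α} {m n p : ℕ}

theorem iterate_eq_iterate_of_modEq (hx : IsPeriodicPt f p x) (hmn : m ≡ n [MOD p]) :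
    f^[m] x = f^[n] x := by
  rw [← hx.iterate_mod_apply m, hmn, hx.iterate_mod_apply n]

theorem iterate_iterate_eq_self_of_dvd_add (hx : IsPeriodicPt f p x) (hmn : p ∣ m + n) :
    f^[n] (f^[m] x) = x := by
  rw [← iterate_add_apply, add_comm]
  exact hx.trans_dvd hmn

theorem iterate_eq_and_iterate_eq_iff (hx : IsPeriodicPt f p x) (hmn : p ∣ m + n) (y : α) :
    f^[m] x = y ∧ f^[n] y = x ↔ f^[m] x = y :=
  and_iff_left_of_imp fun hy => hy ▸ iterate_iterate_eq_self_of_dvd_add hx hmn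

end Iterate

theorem stmt4_general {α : Type*} {f : α → α} {x : α} {m n m' n' p : ℕ}
    (hx : IsPeriodicPt f p x) (hmn : p ∣ m + n) (hmn' : p ∣ m' + n')
    (hmm' : m ≡ m' [MOD p]) (y : α) :
    f^[m] x = y ∧ f^[n] y = x ↔ f^[m'] x = y ∧ f^[n'] y = x := by
  rw [iterate_eq_and_iterate_eq_iff hx hmn, iterate_eq_and_iterate_eq_iff hx hmn',
    iterate_eq_iterate_of_modEq hx hmm']

theorem stmt4 (m n p' m' : ℕ) (hp : 1 ≤ m + n) (hp' : 0 < p') (hdvd : p' ∣ m + n)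
    (hm'1 : 1 ≤ m') (hm'2 : m' ≤ p') (hcong : m' ≡ m [MOD p']) :
    Bset m n ∩ Sper p' = Bset m' (p' - m') ∩ Sper p' :=
  Set.ext fun _ => and_congr_left fun hw =>
    stmt4_general hw.1 hdvd (dvd_of_eq (Nat.add_sub_cancel' hm'2).symm) hcong.symm _
end

section
/- For each integer p ≥ 1, the set of (a,v) ∈ S_p for which F_{a,v} has a parabolic cycle — that is, there exist z ∈ ℂ and an integer n ≥ 1 with F_{a,v}^{∘n}(z) = z and such that the complex derivative (F_{a,v}^{∘n})′(z) is a root of unity — is countable. -/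
open Function Set

/-- `F` has a parabolic cycle: a periodic point whose multiplier is a root of unity. -/
noncomputable def HasParabolicCycle (F : ℂ → ℂ) : Prop :=
  ∃ (z : ℂ) (n : ℕ), 1 ≤ n ∧ F^[n] z = z ∧
    ∃ m : ℕ, 1 ≤ m ∧ (deriv (F^[n]) z) ^ m = 1

/-!
The proof is 3-adic. If the critical point `a` is preperiodic, then `v` is integral over `ℤ[a]`: the
orbit of `a` consists of polynomials in `v` over `ℤ[a]` which, from `F(a) = v` on, are monic of
strictly increasing degree. Periodic points are likewise integral over `ℤ[a, v]`, and as
`F' = 3(z² - a²)`, every multiplier is `3` times an element integral over `ℤ[a]`. If some multiplier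
is a root of unity, then `3` is invertible in the integral closure of `ℤ[a]`, hence in `ℤ[a]`. This
is impossible when `ℤ[a]` is a polynomial ring, so `a` is algebraic, and therefore so is `v`.
-/

section Algebra

open Polynomial

theorem isAlgebraic_of_isUnit_algebraMap_adjoin_singleton {R S : Type*} [CommRing R]
    [CommRing S] [Algebra R S] {x : S} {c : R} (hc : ¬IsUnit c)
    (hu : IsUnit (algebraMap R (Algebra.adjoin R {x}) c)) : IsAlgebraic R x := by
  by_contra hx
  have hCu : IsUnit (C c : R[X]) := by
    simpa only [AlgEquiv.commutes, algebraMap_eq] using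
      hu.map (algEquivOfTranscendental R x hx).symm
  exact hc (isUnit_C.mp hCu)

theorem isUnit_of_isUnit_algebraMap_integralClosure {A K : Type*} [CommRing A] [CommRing K]
    [Algebra A K] [FaithfulSMul A K] {c : A}
    (hu : IsUnit (algebraMap A (integralClosure A K) c)) : IsUnit c := by
  have : FaithfulSMul A (integralClosure A K) := .tower_bot A (integralClosure A K) K
  exact isUnit_of_map_unit _ c hu

theorem isIntegral_of_aeval_eq_of_degree_lt {A K : Type*} [CommRing A] [CommRing K] [Algebra A K]
    {p q : A[X]} {x : K} (hp : p.Monic) (hqp : q.degree < p.degree)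
    (h : aeval x q = aeval x p) : IsIntegral A x :=
  ⟨p - q, hp.sub_of_left hqp, by rw [← aeval_def, map_sub, h, sub_self]⟩

end Algebra

section Multiplier

open Polynomial

variable {A : Type*} [CommRing A] {f : A[X]}

theorem monic_iterate_comp_X_and_natDegree (hf : f.Monic) (hdeg : f.natDegree ≠ 0) (n : ℕ) :
    (f.comp^[n] X).Monic ∧ (f.comp^[n] X).natDegree = f.natDegree ^ n := by
  have : Nontrivial A := .of_polynomial_ne (ne_zero_of_natDegree_gt (Nat.pos_of_ne_zero hdeg))
  induction n with
  | zero => exact ⟨monic_X, by simp⟩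
  | succ n ih =>
    obtain ⟨hmonic, hnat⟩ := ih
    rw [iterate_succ_apply']
    refine ⟨hf.comp hmonic (hnat ▸ pow_ne_zero n hdeg), ?_⟩
    rw [natDegree_comp_eq_of_mul_ne_zero (by simp [hf.leadingCoeff, hmonic.leadingCoeff]), hnat,
      pow_succ']

theorem C_dvd_derivative_iterate_comp_X {c : A} (hc : C c ∣ derivative f) {n : ℕ} (hn : n ≠ 0) :
    C c ∣ derivative (f.comp^[n] X) := by
  obtain ⟨n, rfl⟩ := Nat.exists_eq_succ_of_ne_zero hn
  obtain ⟨g, hg⟩ := hc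
  rw [iterate_succ_apply', derivative_comp, hg, mul_comp, C_comp]
  exact (dvd_mul_right _ _).mul_left _

variable {K : Type*} [CommRing K] [Algebra A K]

theorem aeval_iterate_comp_X (n : ℕ) (z : K) :
    aeval z (f.comp^[n] X) = (fun x => aeval x f)^[n] z := by
  simpa only [aeval_def, eval₂_X] using iterate_comp_eval₂ (algebraMap A K) n z (p := f) (q := X)

theorem isIntegral_of_isPeriodicPt_aeval (hf : f.Monic) (hdeg : 1 < f.natDegree)
    {n : ℕ} (hn : n ≠ 0) {z : K} (hz : IsPeriodicPt (fun x => aeval x f) n z) :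
    IsIntegral A z := by
  obtain ⟨hmonic, hnat⟩ := monic_iterate_comp_X_and_natDegree hf (by lia) n
  refine isIntegral_of_aeval_eq_of_degree_lt hmonic (q := X) (degree_lt_degree ?_) ?_
  · exact natDegree_X_le.trans_lt (hnat ▸ Nat.one_lt_pow hn hdeg)
  · rw [aeval_X, aeval_iterate_comp_X, hz.eq]

theorem isUnit_of_multiplier_pow_eq_one [FaithfulSMul A K] (hf : f.Monic)
    (hdeg : 1 < f.natDegree) {c : A} (hc : C c ∣ derivative f) {n : ℕ} (hn : n ≠ 0) {z : K}
    (hz : IsPeriodicPt (fun x => aeval x f) n z) {m : ℕ} (hm : m ≠ 0)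
    (hμ : aeval z (derivative (f.comp^[n] X)) ^ m = 1) : IsUnit c := by
  have hint (q : A[X]) : IsIntegral A (aeval z q) :=
    .of_mem_of_fg _ (isIntegral_of_isPeriodicPt_aeval hf hdeg hn hz).fg_adjoin_singleton _
      (aeval_mem_adjoin_singleton A z)
  obtain ⟨g, hg⟩ := C_dvd_derivative_iterate_comp_X hc hn
  set μ := aeval z (derivative (f.comp^[n] X)) with hμ_def
  have hμ_eq : μ = algebraMap A K c * aeval z g := by rw [hμ_def, hg, map_mul, aeval_C]
  have hinv : algebraMap A K c * (aeval z g * μ ^ (m - 1)) = 1 := by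
    rw [← mul_assoc, ← hμ_eq, mul_pow_sub_one hm, hμ]
  exact isUnit_of_isUnit_algebraMap_integralClosure <| .of_mul_eq_one
    (⟨_, (hint g).mul ((hint _).pow (m - 1))⟩ : integralClosure A K) (Subtype.ext hinv)

end Multiplier

section Cubic

open Polynomial

variable {A : Type*} [CommRing A]

/-- The cubic `F_{a,v}` as a polynomial in `z` over an arbitrary ring of coefficients, so that
integrality over `ℤ[a]` and its extensions can be discussed. -/
noncomputable def cubicPoly (a v : A) : A[X] :=
  X ^ 3 - C (3 * a ^ 2) * X + C (2 * a ^ 3 + v)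

theorem monic_cubicPoly (a v : A) : (cubicPoly a v).Monic := by
  rw [cubicPoly]
  monicity!

theorem natDegree_cubicPoly [Nontrivial A] (a v : A) : (cubicPoly a v).natDegree = 3 := by
  rw [cubicPoly]
  compute_degree!

theorem C_three_dvd_derivative_cubicPoly (a v : A) : C 3 ∣ derivative (cubicPoly a v) := by
  refine ⟨X ^ 2 - C (a ^ 2), ?_⟩
  simp only [cubicPoly, derivative_add, derivative_sub, derivative_X_pow, derivative_C_mul,
    derivative_X, derivative_C, Nat.cast_ofNat]
  rw [C_mul]
  ring

theorem aeval_cubicPoly [Algebra A ℂ] (a v : A) (z : ℂ) :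
    aeval z (cubicPoly a v) = Fav (algebraMap A ℂ a) (algebraMap A ℂ v) z := by
  simp [cubicPoly, Fav, map_ofNat (algebraMap A ℂ)]

theorem isUnit_three_of_hasParabolicCycle [Algebra A ℂ] [FaithfulSMul A ℂ] (a v : A)
    (h : HasParabolicCycle (Fav (algebraMap A ℂ a) (algebraMap A ℂ v))) : IsUnit (3 : A) := by
  have : Nontrivial A := (algebraMap A ℂ).domain_nontrivial
  have hF : Fav (algebraMap A ℂ a) (algebraMap A ℂ v) = fun z => aeval z (cubicPoly a v) :=
    funext fun z => (aeval_cubicPoly a v z).symm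
  obtain ⟨z, n, hn, hz, m, hm, hμ⟩ := h
  have hderiv : deriv (Fav (algebraMap A ℂ a) (algebraMap A ℂ v))^[n] z =
      aeval z (derivative ((cubicPoly a v).comp^[n] X)) := by
    rw [← Polynomial.deriv_aeval, hF]
    simp only [aeval_iterate_comp_X]
  rw [hderiv] at hμ
  exact isUnit_of_multiplier_pow_eq_one (monic_cubicPoly a v) (by simp [natDegree_cubicPoly])
    (C_three_dvd_derivative_cubicPoly a v) (by lia) (hF ▸ hz) (by lia) hμ

/-- The `n`-th point `F_{a,v}^{∘n}(a)` of the orbit of the critical point `a`, as a polynomial in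
the parameter `v`, which is the variable here. -/
noncomputable def criticalOrbitPoly (a : A) (n : ℕ) : A[X] :=
  (fun q => (cubicPoly (C a) X).eval q)^[n] (C a)

theorem aeval_criticalOrbitPoly [Algebra A ℂ] (a : A) (v : ℂ) (n : ℕ) :
    aeval v (criticalOrbitPoly a n) = (Fav (algebraMap A ℂ a) v)^[n] (algebraMap A ℂ a) := by
  have hsemi : Semiconj (aeval v) (fun q => (cubicPoly (C a) X).eval q)
      (Fav (algebraMap A ℂ a) v) :=
    fun q => by simp [cubicPoly, Fav, map_ofNat (aeval v)]
  rw [criticalOrbitPoly, (hsemi.iterate_right n).eq, aeval_C]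

theorem monic_eval_cubicPoly_C_X_and_natDegree (a : A) {q : A[X]} (hq : q.Monic)
    (hdeg : q.natDegree ≠ 0) : ((cubicPoly (C a) X).eval q).Monic ∧
      ((cubicPoly (C a) X).eval q).natDegree = 3 * q.natDegree := by
  have hcube : (q ^ 3).natDegree = 3 * q.natDegree := hq.natDegree_pow 3
  have heval : (cubicPoly (C a) X).eval q = q ^ 3 + (C (-3 * a ^ 2) * q + C (2 * a ^ 3) + X) := by
    simp only [cubicPoly, eval_add, eval_sub, eval_mul, eval_pow, eval_X, eval_C, eval_ofNat,
      C_mul, C_pow, C_neg, C_ofNat]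
    ring
  have hlow : (C (-3 * a ^ 2) * q + C (2 * a ^ 3) + X).natDegree < (q ^ 3).natDegree := by
    have : (C (-3 * a ^ 2) * q + C (2 * a ^ 3) + X).natDegree ≤ q.natDegree := by
      compute_degree!
      lia
    lia
  rw [heval, natDegree_add_eq_left_of_natDegree_lt hlow]
  exact ⟨(hq.pow 3).add_of_left (degree_lt_degree hlow), hcube⟩

theorem monic_criticalOrbitPoly_succ_and_natDegree [Nontrivial A] (a : A) (n : ℕ) :
    (criticalOrbitPoly a (n + 1)).Monic ∧ (criticalOrbitPoly a (n + 1)).natDegree = 3 ^ n := by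
  induction n with
  | zero =>
    have hX : criticalOrbitPoly a 1 = X := by
      simp only [criticalOrbitPoly, cubicPoly, iterate_one, eval_add, eval_sub, eval_mul, eval_pow,
        eval_X, eval_C]
      ring
    exact hX ▸ ⟨monic_X, natDegree_X⟩
  | succ n ih =>
    obtain ⟨hmonic, hnat⟩ := ih
    rw [criticalOrbitPoly, iterate_succ_apply', ← criticalOrbitPoly, pow_succ', ← hnat]
    exact monic_eval_cubicPoly_C_X_and_natDegree a hmonic (by simp [hnat])

theorem strictMono_degree_criticalOrbitPoly [Nontrivial A] (a : A) :
    StrictMono fun n => (criticalOrbitPoly a n).degree := by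
  have hdeg (n : ℕ) : (criticalOrbitPoly a (n + 1)).degree = (3 ^ n : ℕ) := by
    obtain ⟨hmonic, hnat⟩ := monic_criticalOrbitPoly_succ_and_natDegree a n
    rw [degree_eq_natDegree hmonic.ne_zero, hnat]
  refine strictMono_nat_of_lt_succ fun n => ?_
  cases n with
  | zero =>
    rw [hdeg]
    exact degree_C_le.trans_lt (by simp)
  | succ n =>
    rw [hdeg, hdeg]
    exact_mod_cast Nat.pow_lt_pow_right (by norm_num) n.lt_succ_self

theorem isIntegral_of_iterate_Fav_eq_iterate [Algebra A ℂ] (a : A) {v : ℂ} {m n : ℕ}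
    (hmn : m < n)
    (h : (Fav (algebraMap A ℂ a) v)^[m] (algebraMap A ℂ a) =
      (Fav (algebraMap A ℂ a) v)^[n] (algebraMap A ℂ a)) : IsIntegral A v := by
  have : Nontrivial A := (algebraMap A ℂ).domain_nontrivial
  obtain ⟨k, rfl⟩ := Nat.exists_eq_succ_of_ne_zero hmn.ne_bot
  refine isIntegral_of_aeval_eq_of_degree_lt
    (monic_criticalOrbitPoly_succ_and_natDegree a k).1
    (strictMono_degree_criticalOrbitPoly a hmn) ?_
  rwa [aeval_criticalOrbitPoly, aeval_criticalOrbitPoly]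

end Cubic

theorem isAlgebraic_of_hasParabolicCycle {a v : ℂ} {m n : ℕ} (hmn : m < n)
    (h : (Fav a v)^[m] a = (Fav a v)^[n] a) (hpar : HasParabolicCycle (Fav a v)) :
    IsAlgebraic ℤ a ∧ IsAlgebraic ℤ v := by
  let R := Algebra.adjoin ℤ ({a} : Set ℂ)
  let aR : R := ⟨a, Algebra.self_mem_adjoin_singleton ℤ a⟩
  have hv : IsIntegral R v := isIntegral_of_iterate_Fav_eq_iterate aR hmn h
  have hunit : IsUnit (algebraMap R (integralClosure R ℂ) 3) := by
    rw [map_ofNat]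
    exact isUnit_three_of_hasParabolicCycle (algebraMap R (integralClosure R ℂ) aR) ⟨v, hv⟩ hpar
  have hunitR : IsUnit (algebraMap ℤ R 3) := by
    rw [map_ofNat]
    exact isUnit_of_isUnit_algebraMap_integralClosure hunit
  have ha : IsAlgebraic ℤ a :=
    isAlgebraic_of_isUnit_algebraMap_adjoin_singleton (by decide) hunitR
  have : Algebra.IsAlgebraic ℤ R :=
    R.isAlgebraic_iff.mp (Algebra.isAlgebraic_adjoin_singleton_iff.mpr ha)
  exact ⟨ha, hv.trans_isAlgebraic ℤ⟩

theorem stmt13_general :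
    {w : ℂ × ℂ | (∃ m n, m < n ∧ (Fav w.1 w.2)^[m] w.1 = (Fav w.1 w.2)^[n] w.1) ∧
      HasParabolicCycle (Fav w.1 w.2)}.Countable := by
  have hcount : {x : ℂ | IsAlgebraic ℤ x}.Countable := Algebraic.countable ℤ ℂ
  refine (hcount.prod hcount).mono ?_
  rintro ⟨a, v⟩ ⟨⟨m, n, hmn, h⟩, hpar⟩
  exact isAlgebraic_of_hasParabolicCycle hmn h hpar

theorem stmt13 (p : ℕ) (hp : 1 ≤ p) :
    {w ∈ Sper p | HasParabolicCycle (Fav w.1 w.2)}.Countable :=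
  stmt13_general.mono fun _ ⟨hper, hpar⟩ => .intro ⟨0, p, hp, hper.1.symm⟩ hpar
end

section
/- Let k ≥ 0 and D ≥ 1 be integers, and let f : ℝ → ℝ be a continuous strictly increasing map satisfying f(x + 1) = f(x) + D for all x ∈ ℝ (a lift of an orientation-preserving circle map of degree D). Assume that the set K = {x ∈ [0,1) : f(x) − x ∈ ℤ} of fixed points of the induced circle map has exactly k elements, and that each x₀ ∈ K is topologically repelling, meaning there is ε > 0 such that f(y) − y < f(x₀) − x₀ for all y ∈ (x₀ − ε, x₀) and f(y) − y > f(x₀) − x₀ for all y ∈ (x₀, x₀ + ε). Then D = k + 1. -/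
/-!
Put `g x = f x - x`, so that `g (x + 1) = g x + (D - 1)` and `K` is the set of points of `[0, 1)`
where `g` takes an integer value. At a repelling point `g` crosses its value from below to above,
so a continuous induction shows that once `g` has reached an integer level it stays strictly above
it ever after. Hence `g` takes each integer value at most once, in increasing order, and on `[0, 1)`
it takes exactly the integers in `[g 0, g 1) = [g 0, g 0 + (D - 1))`, of which there are `D - 1`.
-/

open Function Set
open Filter Topology

/-- `g` crosses the level `g x` upwards at `x`: it is strictly below that level just before `x` and
strictly above it just after. For `g = f - id`, where `f` lifts a circle map, an upcrossing at an
integer level is a topologically repelling fixed point. -/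
def IsUpcrossing {α β : Type*} [Preorder α] [TopologicalSpace α] [Preorder β]
    (g : α → β) (x : α) : Prop :=
  (∀ᶠ y in 𝓝[<] x, g y < g x) ∧ ∀ᶠ y in 𝓝[>] x, g x < g y

theorem isUpcrossing_of_Ioo {α β : Type*} [LinearOrder α] [TopologicalSpace α]
    [OrderClosedTopology α] [Preorder β] {g : α → β} {a x b : α} (hax : a < x) (hxb : x < b)
    (hl : ∀ y ∈ Ioo a x, g y < g x) (hr : ∀ y ∈ Ioo x b, g x < g y) : IsUpcrossing g x :=
  ⟨mem_of_superset (Ioo_mem_nhdsLT hax) hl, mem_of_superset (Ioo_mem_nhdsGT hxb) hr⟩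

theorem IsUpcrossing.comp {α β γ : Type*} [Preorder α] [TopologicalSpace α] [Preorder β]
    [TopologicalSpace β] [Preorder γ] {g : β → γ} {φ : α → β} {x : α}
    (hg : IsUpcrossing g (φ x)) (hφ : StrictMono φ) (hφx : ContinuousAt φ x) :
    IsUpcrossing (g ∘ φ) x := by
  have hleft : Tendsto φ (𝓝[<] x) (𝓝[<] φ x) :=
    hφx.continuousWithinAt.tendsto_nhdsWithin fun _ hy ↦ hφ hy
  have hright : Tendsto φ (𝓝[>] x) (𝓝[>] φ x) :=
    hφx.continuousWithinAt.tendsto_nhdsWithin fun _ hy ↦ hφ hy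
  exact ⟨hleft.eventually hg.1, hright.eventually hg.2⟩

section Level

variable {α β : Type*} [ConditionallyCompleteLinearOrder α] [TopologicalSpace α] [OrderTopology α]
  [DenselyOrdered α] [LinearOrder β] [TopologicalSpace β] [OrderClosedTopology β]
  {g : α → β} {a b : α} {c : β}

theorem le_apply_of_eventually_nhdsGT (hg : Continuous g)
    (hc : ∀ x, g x = c → ∀ᶠ y in 𝓝[>] x, c ≤ g y) (hab : a ≤ b) (ha : c ≤ g a) : c ≤ g b := by
  have hclosed : IsClosed ({x | c ≤ g x} ∩ Icc a b) :=
    (isClosed_le continuous_const hg).inter isClosed_Icc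
  refine hclosed.Icc_subset_of_forall_exists_gt ha ?_ (right_mem_Icc.2 hab)
  rintro x ⟨hx, -, hxb⟩ y hxy
  have hright : ∀ᶠ z in 𝓝[>] x, c ≤ g z := by
    rcases eq_or_lt_of_le hx with rfl | hlt
    · exact hc x rfl
    · exact nhdsWithin_le_nhds ((hg.tendsto x).eventually_const_le hlt)
  have : (𝓝[>] x).NeBot := nhdsGT_neBot_of_exists_gt ⟨b, hxb⟩
  exact (hright.and (Ioc_mem_nhdsGT hxy)).exists

theorem lt_apply_of_isUpcrossing (hg : Continuous g) (hc : ∀ x, g x = c → IsUpcrossing g x)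
    (hab : a < b) (ha : c ≤ g a) : c < g b := by
  have hright (x : α) (hx : g x = c) : ∀ᶠ y in 𝓝[>] x, c ≤ g y :=
    (hc x hx).2.mono fun _ hy ↦ (hx ▸ hy).le
  refine (le_apply_of_eventually_nhdsGT hg hright hab.le ha).lt_of_ne fun hb ↦ ?_
  have : (𝓝[<] b).NeBot := nhdsLT_neBot_of_exists_lt ⟨a, hab⟩
  obtain ⟨y, hyb, hay, -⟩ := ((hc b hb.symm).1.and (Ioo_mem_nhdsLT hab)).exists
  exact (hb ▸ hyb).not_ge (le_apply_of_eventually_nhdsGT hg hright hay.le ha)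

end Level

section IntegerLevels

variable {α R : Type*} [ConditionallyCompleteLinearOrder α] [TopologicalSpace α] [OrderTopology α]
  [DenselyOrdered α] [Ring R] [LinearOrder R] [FloorRing R] [TopologicalSpace R]
  [OrderClosedTopology R] {g : α → R} {a b : α}

theorem monotone_ceil_apply (hg : Continuous g)
    (hup : ∀ x, ∀ j : ℤ, g x = j → IsUpcrossing g x) : Monotone fun x ↦ ⌈g x⌉ := by
  intro a b hab
  rcases hab.eq_or_lt with rfl | hlt
  · rfl
  · refine Int.ceil_le.2 (le_of_not_gt fun ha ↦ ?_)
    exact (lt_apply_of_isUpcrossing hg (hup · _) hlt ha.le).not_ge (Int.le_ceil _)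

variable [IsStrictOrderedRing R]

theorem bijOn_ceil_apply (hg : Continuous g)
    (hup : ∀ x, ∀ j : ℤ, g x = j → IsUpcrossing g x) (hab : a ≤ b) :
    BijOn (fun x ↦ ⌈g x⌉) {x ∈ Ico a b | ∃ j : ℤ, g x = j} (Ico ⌈g a⌉ ⌈g b⌉) := by
  have ceil_lt {x y : α} {j : ℤ} (hj : g x = j) (hxy : x < y) : ⌈g x⌉ < ⌈g y⌉ := by
    rw [hj, Int.ceil_intCast, Int.lt_ceil]
    exact lt_apply_of_isUpcrossing hg (hup · j) hxy hj.ge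
  refine ⟨?_, StrictMonoOn.injOn ?_, ?_⟩
  · rintro x ⟨⟨hax, hxb⟩, j, hj⟩
    exact ⟨monotone_ceil_apply hg hup hax, ceil_lt hj hxb⟩
  · rintro x ⟨-, j, hj⟩ y - hxy
    exact ceil_lt hj hxy
  · rintro j ⟨haj, hjb⟩
    obtain ⟨x, hx, hxj⟩ :=
      intermediate_value_Ico hab hg.continuousOn ⟨Int.ceil_le.1 haj, Int.lt_ceil.1 hjb⟩
    exact ⟨x, ⟨hx, j, hxj⟩, by simp only [hxj, Int.ceil_intCast]⟩

theorem finite_setOf_apply_eq_intCast (hg : Continuous g)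
    (hup : ∀ x, ∀ j : ℤ, g x = j → IsUpcrossing g x) (hab : a ≤ b) :
    {x ∈ Ico a b | ∃ j : ℤ, g x = j}.Finite :=
  (bijOn_ceil_apply hg hup hab).finite_iff_finite.2 (finite_Ico _ _)

theorem ncard_setOf_apply_eq_intCast (hg : Continuous g)
    (hup : ∀ x, ∀ j : ℤ, g x = j → IsUpcrossing g x) (hab : a ≤ b) :
    ({x ∈ Ico a b | ∃ j : ℤ, g x = j}.ncard : ℤ) = ⌈g b⌉ - ⌈g a⌉ := by
  have hbij := bijOn_ceil_apply hg hup hab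
  rw [← hbij.injOn.ncard_image, hbij.image_eq, ← Finset.coe_Ico, ncard_coe_finset,
    Int.card_Ico_of_le _ _ (monotone_ceil_apply hg hup hab)]

end IntegerLevels

theorem isUpcrossing_of_forall_mem_Ico {d : ℤ} (g : AddConstMap ℝ ℝ 1 (d : ℝ))
    (hup : ∀ x ∈ Ico (0 : ℝ) 1, (∃ j : ℤ, g x = j) → IsUpcrossing g x)
    (x : ℝ) (j : ℤ) (hj : g x = j) : IsUpcrossing g x := by
  have hshift (y : ℝ) : g (y - ⌊x⌋) = g y - ⌊x⌋ * d := by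
    rw [AddConstMapClass.map_sub_int', zsmul_eq_mul]
  have hfract : IsUpcrossing g (x - ⌊x⌋) := by
    refine hup _ ⟨Int.fract_nonneg x, Int.fract_lt_one x⟩ ⟨j - ⌊x⌋ * d, ?_⟩
    rw [hshift, hj]
    push_cast
    rfl
  have hcomp : IsUpcrossing (fun y ↦ g (y - ⌊x⌋)) x :=
    hfract.comp (φ := (· - (⌊x⌋ : ℝ))) (fun _ _ h ↦ sub_lt_sub_right h _) (by fun_prop)
  simpa only [IsUpcrossing, hshift, sub_lt_sub_iff_right] using hcomp

theorem stmt14_general (D : ℤ) (f : ℝ → ℝ) (hcont : Continuous f)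
    (hlift : ∀ x : ℝ, f (x + 1) = f x + D)
    (K : Set ℝ) (hK : K = {x ∈ Set.Ico (0 : ℝ) 1 | ∃ j : ℤ, f x - x = j})
    (hrep : ∀ x₀ ∈ K, ∃ ε > (0 : ℝ),
      (∀ y, x₀ - ε < y → y < x₀ → f y - y < f x₀ - x₀) ∧
      (∀ y, x₀ < y → y < x₀ + ε → f y - y > f x₀ - x₀)) :
    K.Finite ∧ D = K.ncard + 1 := by
  subst hK
  let g : AddConstMap ℝ ℝ 1 ((D - 1 : ℤ) : ℝ) :=
    ⟨fun x ↦ f x - x, fun x ↦ by rw [hlift]; push_cast; ring⟩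
  have hg : Continuous g := hcont.sub continuous_id
  have hup := isUpcrossing_of_forall_mem_Ico g fun x hx hj ↦ by
    obtain ⟨ε, hε, hl, hr⟩ := hrep x ⟨hx, hj⟩
    exact isUpcrossing_of_Ioo (sub_lt_self x hε) (lt_add_of_pos_right x hε)
      (fun y hy ↦ hl y hy.1 hy.2) (fun y hy ↦ hr y hy.1 hy.2)
  have hceil : ⌈g 1⌉ = ⌈g 0⌉ + (D - 1) := by
    rw [← Int.ceil_add_intCast, ← AddConstMapClass.map_add_const g 0, zero_add]
  have hcard := ncard_setOf_apply_eq_intCast hg hup zero_le_one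
  rw [hceil, add_sub_cancel_left] at hcard
  exact ⟨finite_setOf_apply_eq_intCast hg hup zero_le_one, eq_add_of_sub_eq hcard.symm⟩

theorem stmt14 (k : ℕ) (D : ℤ) (hD : 1 ≤ D) (f : ℝ → ℝ)
    (hcont : Continuous f) (hmono : StrictMono f)
    (hlift : ∀ x : ℝ, f (x + 1) = f x + D)
    (K : Set ℝ) (hK : K = {x ∈ Set.Ico (0 : ℝ) 1 | ∃ j : ℤ, f x - x = j})
    (hKfin : K.Finite) (hKcard : K.ncard = k)
    (hrep : ∀ x₀ ∈ K, ∃ ε > (0 : ℝ),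
      (∀ y, x₀ - ε < y → y < x₀ → f y - y < f x₀ - x₀) ∧
      (∀ y, x₀ < y → y < x₀ + ε → f y - y > f x₀ - x₀)) :
    D = k + 1 :=
  hKcard ▸ (stmt14_general D f hcont hlift K hK hrep).2
end
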